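/- Let $X \subseteq \mathbb{P}^{n+e}$ be a non-degenerate projective variety (reduced and irreducible) of dimension $n$, codimension $e$, and reduction number $r$, with $\deg(X) = \binom{e+r}{r} - 1$. Then the homogeneous coordinate ring $R$ of $X$ has $\mathrm{depth}(R) \ge n$. -/

import Mathlib

set_option synthInstance.maxHeartbeats 1000000
set_option maxHeartbeats 2000000

noncomputable section

open MvPolynomial

namespace Paper

variable (k : Type) [Field k]

/-- The degree-`d` graded component of `S₀/I` as a `k`-subspace. -/
def quotComponent {N : ℕ} (I : Ideal (MvPolynomial (Fin N) k)) (d : ℕ) :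
    Submodule k (MvPolynomial (Fin N) k ⧸ I) :=
  (MvPolynomial.homogeneousSubmodule (Fin N) k d).map
    (Ideal.Quotient.mkₐ k I).toLinearMap

/-- Hilbert function of `S₀/I`. -/
def hilbFn {N : ℕ} (I : Ideal (MvPolynomial (Fin N) k)) (d : ℕ) : ℕ :=
  Module.finrank k (quotComponent k I d)

/-- `I` is a homogeneous ideal. -/
def IdealHomog {N : ℕ} (I : Ideal (MvPolynomial (Fin N) k)) : Prop :=
  ∀ f ∈ I, ∀ d : ℕ, MvPolynomial.homogeneousComponent d f ∈ I

/-- `I` is saturated with respect to the irrelevant maximal ideal. -/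
def IsSaturatedIdeal {N : ℕ} (I : Ideal (MvPolynomial (Fin N) k)) : Prop :=
  ∀ f : MvPolynomial (Fin N) k, (∀ i : Fin N, MvPolynomial.X i * f ∈ I) → f ∈ I

/-- The subscheme defined by `I` is non-degenerate: `I` contains no nonzero linear form. -/
def Nondegenerate {N : ℕ} (I : Ideal (MvPolynomial (Fin N) k)) : Prop :=
  ∀ f ∈ I, f.IsHomogeneous 1 → f = 0

/-- `S₀/I` has Hilbert polynomial of degree `n` and multiplicity (degree) `D`. -/
def HasDeg {N : ℕ} (I : Ideal (MvPolynomial (Fin N) k)) (n D : ℕ) : Prop :=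
  ∃ P : Polynomial ℚ, P.natDegree = n ∧ (D : ℚ) = P.leadingCoeff * (n.factorial : ℚ) ∧
    ∀ᶠ d : ℕ in Filter.atTop, (hilbFn k I d : ℚ) = Polynomial.eval (d : ℚ) P

/-- The irrelevant maximal ideal of `S₀/I`. -/
def irrelevantIdeal {N : ℕ} (I : Ideal (MvPolynomial (Fin N) k)) :
    Ideal (MvPolynomial (Fin N) k ⧸ I) :=
  Ideal.span (Set.range fun i : Fin N => Ideal.Quotient.mk I (MvPolynomial.X i))

/-- `S₀/I` is Cohen-Macaulay of dimension `c`: there is a regular sequence of length `c`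
in the irrelevant maximal ideal. -/
def IsCMQuot {N : ℕ} (I : Ideal (MvPolynomial (Fin N) k)) (c : ℕ) : Prop :=
  ∃ rs : List (MvPolynomial (Fin N) k ⧸ I), rs.length = c ∧
    (∀ x ∈ rs, x ∈ irrelevantIdeal k I) ∧
    RingTheory.Sequence.IsRegular (MvPolynomial (Fin N) k ⧸ I) rs

/-- The ideal of `R = S₀/I` generated by the images of `x_e, …, x_{N-1}`. -/
def tailVarsIdeal {N : ℕ} (e : ℕ) (I : Ideal (MvPolynomial (Fin N) k)) :
    Ideal (MvPolynomial (Fin N) k ⧸ I) :=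
  Ideal.span {y | ∃ i : Fin N, e ≤ (i : ℕ) ∧ y = Ideal.Quotient.mk I (MvPolynomial.X i)}

/-- The reduction number `r_S(R)` of the Noether normalization by the last variables:
the least `t > 0` with `R_{t+1} = J_{t+1}` for `J = (x_e, …, x_{N-1})R`. -/
def reductionNumber {N : ℕ} (e : ℕ) (I : Ideal (MvPolynomial (Fin N) k)) : ℕ :=
  sInf {t | 0 < t ∧ quotComponent k I (t + 1) ≤ (tailVarsIdeal k e I).restrictScalars k}

/-- The reduction number `r(R)`: the minimum of `r_J(R₊)` over all minimal reductions `J`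
of `R₊`, i.e. ideals generated by `c = dim R` linear forms. -/
def redNumAll {N : ℕ} (I : Ideal (MvPolynomial (Fin N) k)) (c : ℕ) : ℕ :=
  sInf {t | 0 < t ∧ ∃ L : Finset (MvPolynomial (Fin N) k ⧸ I),
    (L : Set (MvPolynomial (Fin N) k ⧸ I)) ⊆ quotComponent k I 1 ∧ L.card = c ∧
    quotComponent k I (t + 1) ≤
      (Ideal.span (L : Set (MvPolynomial (Fin N) k ⧸ I))).restrictScalars k}

/-- The `k`-algebra map `S = k[x_e, …, x_{N-1}] → R = S₀/I`. -/
def nnMap {N : ℕ} (e : ℕ) (I : Ideal (MvPolynomial (Fin N) k)) :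
    MvPolynomial {i : Fin N // e ≤ (i : ℕ)} k →ₐ[k] (MvPolynomial (Fin N) k ⧸ I) :=
  MvPolynomial.aeval fun i => Ideal.Quotient.mk I (MvPolynomial.X i.1)

/-- `S = k[x_e, …, x_{N-1}] → R = S₀/I` is a Noether normalization. -/
def IsNoetherNormalization {N : ℕ} (e : ℕ) (I : Ideal (MvPolynomial (Fin N) k)) : Prop :=
  Function.Injective (nnMap k e I) ∧ (nnMap k e I).toRingHom.Finite

/-- `μ_S(R) = dim_k R/S₊R`, the minimal number of generators of `R` as an `S`-module. -/
def muS {N : ℕ} (e : ℕ) (I : Ideal (MvPolynomial (Fin N) k)) : ℕ :=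
  Module.finrank k ((MvPolynomial (Fin N) k ⧸ I) ⧸ tailVarsIdeal k e I)

/-- total degree of an exponent vector -/
def tdeg {N : ℕ} (a : Fin N →₀ ℕ) : ℕ := a.sum fun _ n => n

/-- degree reverse lexicographic order with `x_0 > x_1 > ⋯ > x_{N-1}`. -/
def drlLt {N : ℕ} (a b : Fin N →₀ ℕ) : Prop :=
  tdeg a < tdeg b ∨
    (tdeg a = tdeg b ∧ ∃ i : Fin N, b i < a i ∧ ∀ j : Fin N, i < j → a j = b j)

/-- `m` is the leading (largest, w.r.t. degrevlex) exponent of `p`. -/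
def IsLeadExp {N : ℕ} (p : MvPolynomial (Fin N) k) (m : Fin N →₀ ℕ) : Prop :=
  m ∈ p.support ∧ ∀ m' ∈ p.support, m' ≠ m → drlLt m' m

/-- The initial ideal of `I` with respect to the degree reverse lexicographic order. -/
def initialIdeal {N : ℕ} (I : Ideal (MvPolynomial (Fin N) k)) :
    Ideal (MvPolynomial (Fin N) k) :=
  Ideal.span {q | ∃ p ∈ I, ∃ m, IsLeadExp k p m ∧ q = MvPolynomial.monomial m 1}

/-- `p` is homogeneous of degree `d ∈ ℤ` (`0` if `d < 0`). -/
def HomogOfDeg {σ : Type} (p : MvPolynomial σ k) (d : ℤ) : Prop :=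
  p = 0 ∨ ∃ m : ℕ, (m : ℤ) = d ∧ p.IsHomogeneous m

/-- A minimal graded free resolution of the graded module `M` (with grading `Mdeg`) over
`A = k[σ]`, recording the graded Betti numbers `β i j = dim_k Tor_i^A(M,k)_{i+j}`:
the `i`-th free module has `β i j` generators in internal degree `i + j`. -/
structure MinGradedFreeRes (σ : Type) (M : Type) [AddCommGroup M]
    [Module (MvPolynomial σ k) M] [Module k M] (Mdeg : ℤ → Submodule k M) where
  β : ℕ → ℤ → ℕ
  rowFinite : ∀ i, (Function.support (β i)).Finite
  d : ∀ i : ℕ, (((j : ℤ) × Fin (β (i + 1) j)) →₀ MvPolynomial σ k) →ₗ[MvPolynomial σ k]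
      ((j : ℤ) × Fin (β i j)) →₀ MvPolynomial σ k
  ε : (((j : ℤ) × Fin (β 0 j)) →₀ MvPolynomial σ k) →ₗ[MvPolynomial σ k] M
  graded : ∀ (i : ℕ) (j j' : ℤ) (s : Fin (β (i + 1) j)) (s' : Fin (β i j')),
      HomogOfDeg k (d i (Finsupp.single ⟨j, s⟩ 1) ⟨j', s'⟩) (j + 1 - j')
  minimal : ∀ (i : ℕ) (j j' : ℤ) (s : Fin (β (i + 1) j)) (s' : Fin (β i j')),
      j' = j + 1 → d i (Finsupp.single ⟨j, s⟩ 1) ⟨j', s'⟩ = 0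
  eps_graded : ∀ (j : ℤ) (s : Fin (β 0 j)), ε (Finsupp.single ⟨j, s⟩ 1) ∈ Mdeg j
  eps_surj : Function.Surjective ε
  exact0 : Function.Exact (d 0) ε
  exactSeq : ∀ i : ℕ, Function.Exact (d (i + 1)) (d i)

/-- `Mdeg` is a grading of the `k[σ]`-module `M`. -/
def IsGrading (σ : Type) (M : Type) [AddCommGroup M]
    [Module (MvPolynomial σ k) M] [Module k M] (Mdeg : ℤ → Submodule k M) : Prop :=
  (⨆ d, Mdeg d) = ⊤ ∧ iSupIndep Mdeg ∧
    ∀ (i : σ) (d : ℤ), ∀ x ∈ Mdeg d, (MvPolynomial.X i : MvPolynomial σ k) • x ∈ Mdeg (d + 1)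

/-- The standard grading on `S₀/I` (indexed by `ℤ`). -/
def quotDeg {N : ℕ} (I : Ideal (MvPolynomial (Fin N) k)) (d : ℤ) :
    Submodule k (MvPolynomial (Fin N) k ⧸ I) :=
  if 0 ≤ d then quotComponent k I d.toNat else ⊥

/-- The standard grading on a homogeneous ideal `I ⊆ S₀` (indexed by `ℤ`). -/
def idealDeg {N : ℕ} (I : Ideal (MvPolynomial (Fin N) k)) (d : ℤ) :
    Submodule k ↥I :=
  if 0 ≤ d then
    Submodule.comap ((I.subtype).restrictScalars k)
      (MvPolynomial.homogeneousSubmodule (Fin N) k d.toNat)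
  else ⊥

/-- `χ_m = Σ_{j=0}^m (-1)^j β_{m-j,j}`. -/
def chiOf (β : ℕ → ℤ → ℕ) (m : ℤ) : ℤ :=
  if m < 0 then 0
  else ∑ j ∈ Finset.range (m.toNat + 1), (-1 : ℤ) ^ j * (β (m.toNat - j) (j : ℤ) : ℤ)

/-- projective dimension read off from a minimal resolution's Betti table -/
def pdOf (β : ℕ → ℤ → ℕ) : ℕ∞ :=
  ⨆ i : {i : ℕ // ∃ j, β i j ≠ 0}, ((i : ℕ) : ℕ∞)

/-- index type of the variables `x_t, …, x_{N-1}` -/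
def tailIdx (N t : ℕ) := {i : Fin N // t ≤ (i : ℕ)}


/-- The `S = k[x_e,…,x_{N-1}]`-module structure on `R = S₀/I` via `nnMap`. -/
def nnModule {N : ℕ} (e : ℕ) (I : Ideal (MvPolynomial (Fin N) k)) :
    Module (MvPolynomial {i : Fin N // e ≤ (i : ℕ)} k) (MvPolynomial (Fin N) k ⧸ I) :=
  Module.compHom _ (nnMap k e I).toRingHom

/-- The underlying set of the `S`-submodule of `R = S₀/I` spanned by `s`. -/
def nnSpan {N : ℕ} (e : ℕ) (I : Ideal (MvPolynomial (Fin N) k))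
    (s : Set (MvPolynomial (Fin N) k ⧸ I)) : Set (MvPolynomial (Fin N) k ⧸ I) :=
  letI := nnModule k e I
  (Submodule.span (MvPolynomial {i : Fin N // e ≤ (i : ℕ)} k) s : Set _)

/-- The truncated ideal `(I)_{≥ r+1}`, generated by the homogeneous elements of `I`
of degree at least `r + 1`. -/
def truncIdeal {N : ℕ} (I : Ideal (MvPolynomial (Fin N) k)) (r : ℕ) :
    Ideal (MvPolynomial (Fin N) k) :=
  Ideal.span {f | f ∈ I ∧ ∃ d : ℕ, r + 1 ≤ d ∧ f.IsHomogeneous d}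

end Paper

end

section helpers
open MvPolynomial

structure SGr (k R : Type) [Field k] [CommRing R] [Algebra k R]
    (A : ℕ → Submodule k R) (pr : ℕ → R →ₗ[k] R) : Prop where
  same : ∀ d z, z ∈ A d → pr d z = z
  ne : ∀ d d' z, z ∈ A d → d ≠ d' → pr d' z = 0
  mul : ∀ i j x y, x ∈ A i → y ∈ A j → x * y ∈ A (i + j)
  one : (1 : R) ∈ A 0
  zero_le : A 0 ≤ Submodule.span k {1}
  top : ⨆ d, A d = ⊤
  succ : ∀ d, A (d + 1) ≤ A 1 * A d

namespace SGr

variable {k R : Type} [Field k] [CommRing R] [Algebra k R]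
    {A : ℕ → Submodule k R} {pr : ℕ → R →ₗ[k] R} {n : ℕ}

lemma gm (h : SGr k R A pr) : SetLike.GradedMonoid A where
  one_mem := h.one
  mul_mem := fun {_ _ _ _} hx hy => h.mul _ _ _ _ hx hy

lemma pr_mem (h : SGr k R A pr) (d : ℕ) (z : R) : pr d z ∈ A d := by
  have hz : z ∈ ⨆ d, A d := h.top ▸ Submodule.mem_top
  induction hz using Submodule.iSup_induction' with
  | mem i x hx =>
    by_cases hi : i = d
    · subst hi; rw [h.same _ _ hx]; exact hx
    · rw [h.ne _ _ _ hx hi]; exact zero_mem _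
  | zero => simp
  | add x y _ _ hx hy => rw [map_add]; exact add_mem hx hy

/-- multiplication by a homogeneous element shifts projections -/
lemma pr_mul (h : SGr k R A pr) (d D : ℕ) (m w : R) (hm : m ∈ A d) :
    pr (d + D) (m * w) = m * pr D w := by
  have hz : w ∈ ⨆ d, A d := h.top ▸ Submodule.mem_top
  induction hz using Submodule.iSup_induction' with
  | mem i x hx =>
    have := h.mul _ _ _ _ hm hx
    by_cases hi : i = D
    · subst hi; rw [h.same _ _ hx, h.same _ _ this]
    · rw [h.ne _ _ _ hx hi, h.ne _ _ _ this (by omega), mul_zero]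
  | zero => simp
  | add x y _ _ hx hy => rw [mul_add, map_add, map_add, hx, hy, mul_add]

lemma pr_mul_lt (h : SGr k R A pr) (d D : ℕ) (hD : D < d) (m w : R) (hm : m ∈ A d) :
    pr D (m * w) = 0 := by
  have hz : w ∈ ⨆ d, A d := h.top ▸ Submodule.mem_top
  induction hz using Submodule.iSup_induction' with
  | mem i x hx =>
    exact h.ne _ _ _ (h.mul _ _ _ _ hm hx) (by omega)
  | zero => simp
  | add x y _ _ hx hy => rw [mul_add, map_add, hx, hy, add_zero]

section poly
variable [Algebra (MvPolynomial (Fin (n + 1)) k) R]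
  [IsScalarTower k (MvPolynomial (Fin (n + 1)) k) R]

local notation "𝐒" => MvPolynomial (Fin (n + 1)) k

lemma map_mem (h : SGr k R A pr) (hl : ∀ i, algebraMap 𝐒 R (X i) ∈ A 1)
    (j : ℕ) (a : 𝐒) (ha : a.IsHomogeneous j) : algebraMap 𝐒 R a ∈ A j := by
  have := h.gm
  rw [a.as_sum, map_sum]
  refine sum_mem fun m hm => ?_
  have hm' : m.degree = j := by
    have := ha (mem_support_iff.mp hm)
    rw [Finsupp.degree_eq_weight_one]; exact this
  rw [monomial_eq, ← MvPolynomial.algebraMap_eq, map_mul, ← IsScalarTower.algebraMap_apply,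
    ← Algebra.smul_def]
  refine Submodule.smul_mem _ _ ?_
  rw [Finsupp.prod, map_prod, ← hm', Finsupp.degree_apply]
  refine SetLike.prod_mem_graded _ _ _ fun i _ => ?_
  rw [map_pow]
  simpa using SetLike.pow_mem_graded (m i) (hl i)

lemma pr_map (h : SGr k R A pr) (hl : ∀ i, algebraMap 𝐒 R (X i) ∈ A 1) (D : ℕ) (a : 𝐒) :
    pr D (algebraMap 𝐒 R a) = algebraMap 𝐒 R (homogeneousComponent D a) := by
  conv_lhs => rw [← sum_homogeneousComponent a]
  rw [map_sum, map_sum, Finset.sum_eq_single D]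
  · exact h.same _ _ (h.map_mem hl _ _ (homogeneousComponent_isHomogeneous _ _))
  · intro b _ hb
    exact h.ne _ _ _ (h.map_mem hl _ _ (homogeneousComponent_isHomogeneous _ _)) hb
  · intro hD
    rw [homogeneousComponent_eq_zero, map_zero, map_zero]
    simpa using hD

/-- homogeneous part of coefficients -/
lemma comp_sum (h : SGr k R A pr) (hl : ∀ i, algebraMap 𝐒 R (X i) ∈ A 1)
    {ι : Type} (s : Finset ι) (m : ι → R) (dg : ι → ℕ) (hm : ∀ i, m i ∈ A (dg i))
    (a : ι → 𝐒) (D : ℕ) :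
    pr D (∑ i ∈ s, a i • m i) =
      ∑ i ∈ s, (if dg i ≤ D then homogeneousComponent (D - dg i) (a i) else 0) • m i := by
  rw [map_sum]
  refine Finset.sum_congr rfl fun i _ => ?_
  rw [Algebra.smul_def, mul_comm]
  split_ifs with hd
  · have := h.pr_mul (dg i) (D - dg i) (m i) (algebraMap 𝐒 R (a i)) (hm i)
    rw [Nat.add_sub_cancel' hd] at this
    rw [this, h.pr_map hl, Algebra.smul_def, mul_comm]
  · rw [h.pr_mul_lt _ _ (by omega) _ _ (hm i), zero_smul]

lemma le_pow (h : SGr k R A pr) (W : Submodule 𝐒 R) (h1 : (1 : R) ∈ W)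
    (hW : ∀ x ∈ A 1, x ∈ W) (d : ℕ) : ∀ x ∈ A d, x ∈ W ^ d := by
  induction d with
  | zero =>
    intro x hx
    obtain ⟨c, rfl⟩ := Submodule.mem_span_singleton.mp (h.zero_le hx)
    rw [pow_zero, ← algebraMap_smul 𝐒 c (1:R)]
    exact Submodule.smul_mem _ _ (Submodule.one_le.mp le_rfl)
  | succ d ih =>
    intro x hx
    refine Submodule.mul_induction_on (h.succ d hx) ?_ fun _ _ => add_mem
    intro a ha b hb
    rw [pow_succ']
    exact Submodule.mul_mem_mul (hW a ha) (ih b hb)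

lemma red (h : SGr k R A pr) (hl : ∀ i, algebraMap 𝐒 R (X i) ∈ A 1) (r : ℕ)
    (hr : ∀ x ∈ A (r + 1), x ∈ Ideal.span (Set.range fun i => algebraMap 𝐒 R (X i)))
    (N : Submodule 𝐒 R) (hN : ∀ x ∈ A r, x ∈ N) (d : ℕ) :
    ∀ x ∈ A (r + d), x ∈ N := by
  have key : ∀ d, ∀ x ∈ A (r + d + 1), ∃ w : Fin (n + 1) → R, (∀ i, w i ∈ A (r + d)) ∧
      x = ∑ i, algebraMap 𝐒 R (X i) * w i := by
    intro d
    induction d with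
    | zero =>
      intro x hx
      obtain ⟨w, hw⟩ := Ideal.mem_span_range_iff_exists_fun.mp (hr x hx)
      refine ⟨fun i => pr r (w i), fun i => h.pr_mem _ _, ?_⟩
      have := congrArg (pr (r + 1)) hw
      rw [h.same _ _ hx, map_sum] at this
      rw [← this]
      refine Finset.sum_congr rfl fun i _ => ?_
      rw [mul_comm (w i), add_comm r 1, h.pr_mul _ _ _ _ (hl i)]
    | succ d ih =>
      intro x hx
      refine Submodule.mul_induction_on (h.succ _ hx) ?_ ?_
      · intro a ha b hb
        obtain ⟨w, hw, rfl⟩ := ih b hb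
        refine ⟨fun i => a * w i, fun i => ?_, ?_⟩
        · have := h.mul _ _ _ _ ha (hw i)
          rwa [show 1 + (r + d) = r + (d + 1) by ring] at this
        · rw [Finset.mul_sum]; exact Finset.sum_congr rfl fun i _ => by ring
      · rintro x y ⟨w, hw, rfl⟩ ⟨w', hw', rfl⟩
        exact ⟨w + w', fun i => add_mem (hw i) (hw' i), by
          simp [mul_add, Finset.sum_add_distrib]⟩
  induction d with
  | zero => exact hN
  | succ d ih =>
    intro x hx
    obtain ⟨w, hw, rfl⟩ := key d x hx
    refine sum_mem fun i _ => ?_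
    rw [← Algebra.smul_def]
    exact N.smul_mem _ (ih _ (hw i))

lemma pow_eq_top (h : SGr k R A pr) (hl : ∀ i, algebraMap 𝐒 R (X i) ∈ A 1) (r : ℕ)
    (hr : ∀ x ∈ A (r + 1), x ∈ Ideal.span (Set.range fun i => algebraMap 𝐒 R (X i)))
    (W : Submodule 𝐒 R) (h1 : (1 : R) ∈ W)
    (hW : ∀ x ∈ A 1, x ∈ W) : W ^ r = ⊤ := by
  have hle : ∀ d, ∀ x ∈ A d, x ∈ W ^ r := by
    intro d x hx
    rcases le_total d r with hd | hd
    · exact pow_le_pow_right' (Submodule.one_le.mpr h1) hd (h.le_pow W h1 hW d x hx)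
    · obtain ⟨c, rfl⟩ := Nat.exists_eq_add_of_le hd
      exact h.red hl r hr _ (h.le_pow W h1 hW r) c x hx
  refine eq_top_iff.mpr fun z _ => ?_
  have hz : z ∈ ⨆ d, A d := h.top ▸ Submodule.mem_top
  induction hz using Submodule.iSup_induction' with
  | mem i x hx => exact hle i x hx
  | zero => simp
  | add x y _ _ hx hy => exact add_mem (hx trivial) (hy trivial)

lemma fin (h : SGr k R A pr) (hl : ∀ i, algebraMap 𝐒 R (X i) ∈ A 1) (r : ℕ)
    (hr : ∀ x ∈ A (r + 1), x ∈ Ideal.span (Set.range fun i => algebraMap 𝐒 R (X i)))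
    (hfg : (A 1).FG) : Module.Finite 𝐒 R := by
  obtain ⟨s, hs⟩ := hfg
  classical
  let W : Submodule 𝐒 R := Submodule.span 𝐒 (insert 1 s : Finset R)
  have hW : W ^ r = ⊤ := h.pow_eq_top hl r hr W (Submodule.subset_span (by simp)) (by
    intro x hx
    rw [← hs] at hx
    have : Submodule.span k (s : Set R) ≤ W.restrictScalars k :=
      Submodule.span_le.mpr fun y hy => Submodule.subset_span (by simp [hy])
    exact this hx)
  exact ⟨hW ▸ Submodule.FG.pow ⟨_, rfl⟩ r⟩

lemma inj [IsDomain R] [Module.Finite 𝐒 R] (hdim : ringKrullDim R = n + 1) :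
    Function.Injective (algebraMap 𝐒 R) := by
  rw [injective_iff_map_eq_zero]
  intro f hf
  by_contra hf0
  let T := (Algebra.ofId 𝐒 R).range
  have hIntegral : Algebra.IsIntegral T R := Algebra.IsIntegral.tower_top (R := 𝐒)
  have h1 : ringKrullDim R ≤ ringKrullDim T := by
    refine Order.krullDim_le_of_strictMono
      (fun I : PrimeSpectrum R => (PrimeSpectrum.comap (algebraMap T R) I)) ?_
    intro I J hIJ
    exact Ideal.IsIntegral.comap_lt_comap (I := I.asIdeal) (J := J.asIdeal) hIJ
  have h2 := ringKrullDim_succ_le_of_surjective (Algebra.ofId 𝐒 R).rangeRestrict.toRingHom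
    (Algebra.ofId 𝐒 R).rangeRestrict_surjective (r := f) (mem_nonZeroDivisors_of_ne_zero hf0)
    (Subtype.ext hf)
  rw [MvPolynomial.ringKrullDim_of_isNoetherianRing, ringKrullDim_eq_zero_of_field] at h2
  have h3 := (add_le_add_left h1 1).trans h2
  rw [hdim] at h3
  simp at h3
  norm_cast at h3
  simp at h3
lemma finrank_hom (n d : ℕ) (k : Type) [Field k] :
    Module.finrank k (homogeneousSubmodule (Fin (n + 1)) k d) = (d + n).choose n := by
  rw [homogeneousSubmodule_eq_finsupp_supported]
  have e := basisRestrictSupport (σ := Fin (n+1)) k {m : Fin (n + 1) →₀ ℕ | m.degree = d}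
  change Module.finrank k (restrictSupport k {m : Fin (n + 1) →₀ ℕ | m.degree = d}) = _
  rw [Module.finrank_eq_nat_card_basis e]
  have : {m : Fin (n + 1) →₀ ℕ | m.degree = d} =
      ((Finset.univ : Finset (Fin (n+1))).finsuppAntidiag d : Set _) := by
    ext m
    simp [Finsupp.degree_eq_sum]
  rw [this, Nat.card_coe_set_eq, Set.ncard_coe_finset, Finset.card_finsuppAntidiag_nat_eq_choose]
  simp only [Finset.card_univ, Fintype.card_fin]
  rw [show n + 1 + d - 1 = d + n by omega, Nat.choose_symm_add]

instance (n d : ℕ) (k : Type) [Field k] :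
    FiniteDimensional k (homogeneousSubmodule (Fin (n + 1)) k d) :=
  Module.Finite.iff_fg.mpr (homogeneousSubmodule_fg _ _ _)

lemma lower (h : SGr k R A pr) (hl : ∀ i, algebraMap 𝐒 R (X i) ∈ A 1)
    {ι : Type} [Fintype ι] (m : ι → R) (dg : ι → ℕ) (hm : ∀ i, m i ∈ A (dg i)) (r : ℕ)
    (hdg : ∀ i, dg i ≤ r) (hli : LinearIndependent 𝐒 m) (hfd : ∀ d, FiniteDimensional k (A d))
    (d : ℕ) : Fintype.card ι * (d + n).choose n ≤ Module.finrank k (A (d + r)) := by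
  let F : (ι → homogeneousSubmodule (Fin (n + 1)) k d) →ₗ[k] R :=
    { toFun := fun a => ∑ i, (X 0 ^ (r - dg i) * (a i : 𝐒)) • m i
      map_add' := fun a b => by
        simp [mul_add, add_smul, Finset.sum_add_distrib]
      map_smul' := fun c a => by
        simp [Finset.smul_sum] }
  have hF : ∀ a, F a ∈ A (d + r) := by
    intro a
    refine sum_mem fun i _ => ?_
    rw [Algebra.smul_def]
    have h1 : (X 0 ^ (r - dg i) * (a i : 𝐒)).IsHomogeneous (1 * (r - dg i) + d) :=
      ((isHomogeneous_X k 0).pow _).mul (a i).2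
    have := h.mul _ _ _ _ (h.map_mem hl _ _ h1) (hm i)
    rwa [show 1 * (r - dg i) + d + dg i = d + r by have := hdg i; omega] at this
  have hinj : Function.Injective (F.codRestrict (A (d + r)) hF) := by
    rw [← LinearMap.ker_eq_bot, LinearMap.ker_codRestrict, LinearMap.ker_eq_bot']
    intro a ha
    have h0 := Fintype.linearIndependent_iff.mp hli _ ha
    funext i
    have := h0 i
    rw [mul_eq_zero] at this
    exact Subtype.ext (this.resolve_left (pow_ne_zero _ (X_ne_zero _)))
  have := hfd (d + r)
  have h2 := LinearMap.finrank_le_finrank_of_injective hinj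
  rw [Module.finrank_pi_fintype] at h2
  simpa [finrank_hom] using h2

lemma span_pr (h : SGr k R A pr) (hl : ∀ i, algebraMap 𝐒 R (X i) ∈ A 1)
    {ι : Type} [Fintype ι] (m : ι → R) (dg : ι → ℕ) (hm : ∀ i, m i ∈ A (dg i)) (D : ℕ) (z : R)
    (hz : z ∈ Submodule.span 𝐒 (Set.range m)) : pr D z ∈ Submodule.span 𝐒 (Set.range m) := by
  obtain ⟨a, rfl⟩ := (Submodule.mem_span_range_iff_exists_fun _).mp hz
  rw [h.comp_sum hl Finset.univ m dg hm a D]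
  exact sum_mem fun i _ => Submodule.smul_mem _ _ (Submodule.subset_span ⟨i, rfl⟩)

lemma upper [IsDomain R] (hinj : Function.Injective (algebraMap 𝐒 R))
    (h : SGr k R A pr) (hl : ∀ i, algebraMap 𝐒 R (X i) ∈ A 1)
    {ι : Type} [Fintype ι] (m : ι → R) (dg : ι → ℕ) (hm : ∀ i, m i ∈ A (dg i)) (r : ℕ)
    (hdg : ∀ i, dg i ≤ r) (s : 𝐒) (hs0 : s ≠ 0) (δ : ℕ) (hs : s.IsHomogeneous δ)
    (hsp : ∀ z : R, s • z ∈ Submodule.span 𝐒 (Set.range m)) 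
    (d : ℕ) (hd : r ≤ d) : Module.finrank k (A d) ≤ Fintype.card ι * (d + (δ + n)).choose n := by
  let F : (∀ i : ι, homogeneousSubmodule (Fin (n + 1)) k (d + δ - dg i)) →ₗ[k] R :=
    { toFun := fun a => ∑ i, (a i : 𝐒) • m i
      map_add' := fun a b => by
        simp [add_smul, Finset.sum_add_distrib]
      map_smul' := fun c a => by
        simp [Finset.smul_sum] }
  let M : R →ₗ[k] R := LinearMap.mulLeft k (algebraMap 𝐒 R s)
  have hM : Function.Injective M := fun x y hxy =>
    mul_left_cancel₀ (by simpa using (map_ne_zero_iff _ hinj).mpr hs0) hxy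
  have hle : (A d).map M ≤ LinearMap.range F := by
    rintro _ ⟨z, hz, rfl⟩
    obtain ⟨a, ha⟩ := (Submodule.mem_span_range_iff_exists_fun _).mp (hsp z)
    have hsz : s • z ∈ A (d + δ) := by
      rw [Algebra.smul_def, add_comm]; exact h.mul _ _ _ _ (h.map_mem hl _ _ hs) hz
    have h2 := h.comp_sum hl Finset.univ m dg hm a (d + δ)
    rw [ha, h.same _ _ hsz] at h2
    refine ⟨fun i => ⟨homogeneousComponent (d + δ - dg i) (a i),
      homogeneousComponent_isHomogeneous _ _⟩, ?_⟩
    change ∑ i, _ = algebraMap 𝐒 R s * z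
    rw [← Algebra.smul_def, h2]
    refine Finset.sum_congr rfl fun i _ => ?_
    rw [if_pos (by have := hdg i; omega)]
  calc Module.finrank k (A d) = Module.finrank k ((A d).map M) :=
        (LinearEquiv.finrank_eq (Submodule.equivMapOfInjective M hM (A d)))
    _ ≤ Module.finrank k (LinearMap.range F) := Submodule.finrank_mono hle
    _ ≤ _ := LinearMap.finrank_range_le F
    _ = ∑ i, (d + δ - dg i + n).choose n := by
        rw [Module.finrank_pi_fintype]; simp [finrank_hom]
    _ ≤ ∑ i : ι, (d + (δ + n)).choose n :=
        Finset.sum_le_sum fun i _ => Nat.choose_le_choose _ (by omega)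
    _ = _ := by simp

lemma tend (n c c' : ℕ) : Filter.Tendsto (fun d : ℕ => ((d + c).choose n : ℝ) / ((d : ℝ) + c') ^ n)
    Filter.atTop (nhds (1 / n.factorial)) := by
  have h0 := isEquivalent_choose n
  have h1 : Filter.Tendsto (fun d : ℕ => ((d.choose n : ℝ)) / (d : ℝ) ^ n) Filter.atTop
      (nhds (1 / n.factorial)) := by
    have hne : ∀ᶠ d : ℕ in Filter.atTop, ((d : ℝ) ^ n / n.factorial) ≠ 0 := by
      filter_upwards [Filter.eventually_gt_atTop 0] with d hd
      positivity
    have h2 := ((Asymptotics.isEquivalent_iff_tendsto_one hne).mp h0).mul_const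
      (1 / (n.factorial : ℝ))
    rw [one_mul] at h2
    refine h2.congr fun d => ?_
    have : (n.factorial : ℝ) ≠ 0 := by positivity
    simp only [Pi.div_apply]
    field_simp
  have h2 := (Filter.tendsto_add_atTop_iff_nat c).mpr h1
  have h3 : Filter.Tendsto (fun d : ℕ => (((c : ℝ) + 1 * d) / (c' + 1 * d)) ^ n) Filter.atTop
      (nhds 1) := by
    have := (tendsto_add_mul_div_add_mul_atTop_nhds (c : ℝ) c' 1 (d := 1) one_ne_zero).pow n
    simpa using this
  have h4 := h2.mul h3
  rw [mul_one] at h4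
  refine h4.congr' ?_
  filter_upwards [Filter.eventually_gt_atTop 0] with d hd
  have hd : (0 : ℝ) < d := by exact_mod_cast hd
  have e1 : (c : ℝ) + 1 * d = d + c := by ring
  have e2 : (c' : ℝ) + 1 * d = d + c' := by ring
  rw [e1, e2]
  push_cast
  rw [div_pow]
  have : (0 : ℝ) < (d + c) := by positivity
  have : (0 : ℝ) < (d + c') := by positivity
  field_simp

lemma rank_eq (hn : 0 < n) (H : ℕ → ℕ) (P : Polynomial ℚ) (hP : P.natDegree = n)
    (hH : ∀ᶠ d : ℕ in Filter.atTop, (H d : ℚ) = Polynomial.eval (d : ℚ) P)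
    (ρ r δ : ℕ) (hlow : ∀ d, ρ * (d + n).choose n ≤ H (d + r))
    (hup : ∀ d, r ≤ d → H d ≤ ρ * (d + (δ + n)).choose n) :
    (ρ : ℚ) = P.leadingCoeff * n.factorial := by
  let Q : Polynomial ℝ := P.map (algebraMap ℚ ℝ)
  have hQd : Q.natDegree = n := by rw [Polynomial.natDegree_map]; exact hP
  have hQ0 : Q ≠ 0 := by rintro h; rw [h] at hQd; simp at hQd; omega
  have hlim : Filter.Tendsto (fun d : ℕ => (H d : ℝ) / (d : ℝ) ^ n) Filter.atTop
      (nhds Q.leadingCoeff) := by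
    have h1 := Polynomial.div_tendsto_atTop_leadingCoeff_div_of_degree_eq Q (Polynomial.X ^ n)
      (by rw [Polynomial.degree_eq_natDegree hQ0, hQd, Polynomial.degree_X_pow])
    have h2 := h1.comp (tendsto_natCast_atTop_atTop (R := ℝ))
    simp only [Polynomial.monic_X_pow, Polynomial.Monic.leadingCoeff, div_one] at h2
    refine h2.congr' ?_
    filter_upwards [hH] with d hd
    simp only [Function.comp, Polynomial.eval_pow, Polynomial.eval_X]
    congr 1
    have : ((H d : ℚ) : ℝ) = ((Polynomial.eval (d : ℚ) P : ℚ) : ℝ) := by rw [hd]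
    simp only [Rat.cast_natCast] at this
    rw [this, Polynomial.eval_map_algebraMap]
    have := Polynomial.aeval_algebraMap_apply ℝ (d : ℚ) P
    simpa using this
  have l1 : (ρ : ℝ) * (1 / n.factorial) ≤ Q.leadingCoeff := by
    refine le_of_tendsto_of_tendsto' ((tend n n r).const_mul (ρ : ℝ))
      ((Filter.tendsto_add_atTop_iff_nat r).mpr hlim) fun d => ?_
    rw [← mul_div_assoc]
    push_cast
    gcongr
    exact_mod_cast hlow d
  have l2 : Q.leadingCoeff ≤ (ρ : ℝ) * (1 / n.factorial) := by
    refine le_of_tendsto_of_tendsto hlim ((tend n (δ + n) 0).const_mul (ρ : ℝ)) ?_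
    filter_upwards [Filter.eventually_ge_atTop r] with d hd
    rw [← mul_div_assoc]
    simp only [Nat.cast_zero, add_zero]
    gcongr
    exact_mod_cast hup d hd
  have l3 := le_antisymm l1 l2
  have hf : (n.factorial : ℝ) ≠ 0 := by positivity
  have hlc : Q.leadingCoeff = ((P.leadingCoeff : ℚ) : ℝ) := by
    rw [Polynomial.leadingCoeff_map]; rfl
  rw [hlc] at l3
  have : (ρ : ℝ) = (P.leadingCoeff : ℝ) * n.factorial := by
    rw [← l3]; field_simp
  exact_mod_cast this

lemma rank_main [IsDomain R] (hinj : Function.Injective (algebraMap 𝐒 R)) (hn : 0 < n)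
    (h : SGr k R A pr) (hl : ∀ i, algebraMap 𝐒 R (X i) ∈ A 1)
    {ι : Type} [Fintype ι] (m : ι → R) (dg : ι → ℕ) (hm : ∀ i, m i ∈ A (dg i)) (r : ℕ)
    (hdg : ∀ i, dg i ≤ r) (hfd : ∀ d, FiniteDimensional k (A d))
    (hspan : Submodule.span 𝐒 (Set.range m) = ⊤)
    (P : Polynomial ℚ) (hP : P.natDegree = n)
    (hH : ∀ᶠ d : ℕ in Filter.atTop,
      (Module.finrank k (A d) : ℚ) = Polynomial.eval (d : ℚ) P) :
    ∃ B : Finset ι, LinearIndepOn 𝐒 m (B : Set ι) ∧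
      (∀ i ∉ B, ∃ a : 𝐒, a ≠ 0 ∧ a • m i ∈ Submodule.span 𝐒 (m '' B)) ∧
      (B.card : ℚ) = P.leadingCoeff * n.factorial := by
  classical
  obtain ⟨B', hB, hmax⟩ := exists_maximal_linearIndepOn 𝐒 m
  obtain ⟨B, rfl⟩ : ∃ B : Finset ι, (B : Set ι) = B' := ⟨B'.toFinite.toFinset, by simp⟩
  refine ⟨B, hB, hmax, ?_⟩
  have hmax' : ∀ i, ∃ a : 𝐒, a ≠ 0 ∧ a • m i ∈ Submodule.span 𝐒 (m '' B) := by
    intro i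
    by_cases hi : i ∈ (B : Set ι)
    · exact ⟨1, one_ne_zero, by rw [one_smul]; exact Submodule.subset_span ⟨i, hi, rfl⟩⟩
    · exact hmax i hi
  choose a ha0 ha using hmax'
  let b := ∏ i, a i
  have hb0 : b ≠ 0 := Finset.prod_ne_zero_iff.mpr fun i _ => ha0 i
  have himg : m '' B = Set.range (fun i : B => m i) := by
    rw [Set.image_eq_range]; rfl
  have hbm : ∀ i, b • m i ∈ Submodule.span 𝐒 (m '' B) := by
    intro i
    have : b = (∏ j ∈ Finset.univ.erase i, a j) * a i :=
      (Finset.prod_erase_mul _ _ (Finset.mem_univ i)).symm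
    rw [this, mul_smul]
    exact Submodule.smul_mem _ _ (ha i)
  obtain ⟨δ, hδ⟩ : ∃ δ, homogeneousComponent δ b ≠ 0 := by
    by_contra! hc
    apply hb0
    rw [← sum_homogeneousComponent b]
    exact Finset.sum_eq_zero fun i _ => hc i
  have hcm : ∀ i, homogeneousComponent δ b • m i ∈
      Submodule.span 𝐒 (Set.range (fun i : B => m i)) := by
    intro i
    have h1 := hbm i
    rw [himg] at h1
    have h2 := h.span_pr hl (fun i : B => m i) (fun i => dg i) (fun i => hm i) (dg i + δ) _ h1
    rw [Algebra.smul_def, mul_comm, h.pr_mul _ _ _ _ (hm i), h.pr_map hl, mul_comm,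
      ← Algebra.smul_def] at h2
    exact h2
  have hall : ∀ z : R, homogeneousComponent δ b • z ∈
      Submodule.span 𝐒 (Set.range (fun i : B => m i)) := by
    intro z
    have hz : z ∈ Submodule.span 𝐒 (Set.range m) := hspan ▸ Submodule.mem_top
    obtain ⟨c, rfl⟩ := (Submodule.mem_span_range_iff_exists_fun _).mp hz
    rw [Finset.smul_sum]
    refine sum_mem fun i _ => ?_
    rw [smul_comm]
    exact Submodule.smul_mem _ _ (hcm i)
  have hlow := h.lower hl (fun i : B => m i) (fun i => dg i) (fun i => hm i) r (fun i => hdg i)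
    hB hfd
  have hup := upper hinj h hl (fun i : B => m i) (fun i => dg i) (fun i => hm i) r (fun i => hdg i)
    _ hδ δ (homogeneousComponent_isHomogeneous _ _) hall
  simp only [Fintype.card_coe] at hlow hup
  exact rank_eq hn (fun d => Module.finrank k (A d)) P hP hH B.card r δ hlow hup

lemma ker_cyclic [IsDomain R] (hinj : Function.Injective (algebraMap 𝐒 R))
    {ι : Type} [Fintype ι] (m : ι → R) (B : Finset ι) (hB : LinearIndepOn 𝐒 m (B : Set ι))
    (hmax : ∀ i ∉ B, ∃ a : 𝐒, a ≠ 0 ∧ a • m i ∈ Submodule.span 𝐒 (m '' B))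
    (hcard : B.card + 1 = Fintype.card ι) :
    ∃ v : ι → 𝐒, (∃ i, v i ≠ 0) ∧ (∑ i, v i • m i = 0) ∧
      ∀ u : ι → 𝐒, ∑ i, u i • m i = 0 → ∃ c : 𝐒, ∀ i, u i = c * v i := by
  classical
  have hsm : ∀ (g : 𝐒) (x : R), g ≠ 0 → g • x = 0 → x = 0 := by
    intro g x hg hx
    rw [Algebra.smul_def, mul_eq_zero] at hx
    exact hx.resolve_left ((map_ne_zero_iff _ hinj).mpr hg)
  obtain ⟨i0, hi0⟩ : ∃ i0, Finset.univ \ B = {i0} := by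
    rw [← Finset.card_eq_one, Finset.card_sdiff_of_subset (Finset.subset_univ B),
      Finset.card_univ]
    omega
  have hi0B : i0 ∉ B := by
    have : i0 ∈ Finset.univ \ B := by rw [hi0]; simp
    simpa using this
  have huniv : (Finset.univ : Finset ι) = insert i0 B := by
    ext i
    simp only [Finset.mem_univ, Finset.mem_insert, true_iff]
    by_cases hi : i ∈ B
    · exact Or.inr hi
    · left
      have : i ∈ Finset.univ \ B := by simp [hi]
      rw [hi0] at this
      simpa using this
  obtain ⟨a, ha0, ha⟩ := hmax i0 hi0B
  obtain ⟨c, hc⟩ := (Submodule.mem_span_image_finset_iff_exists_fun' 𝐒).mp ha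
  let w : ι → 𝐒 := fun i => if i = i0 then -a else c i
  have hw : ∑ i, w i • m i = 0 := by
    rw [huniv, Finset.sum_insert hi0B]
    have : ∑ i ∈ B, w i • m i = ∑ i ∈ B, c i • m i := by
      refine Finset.sum_congr rfl fun i hi => ?_
      have : i ≠ i0 := fun h => hi0B (h ▸ hi)
      simp [w, this]
    rw [this, hc]
    simp [w]
  have hzero : ∀ u : ι → 𝐒, ∑ i, u i • m i = 0 → u i0 = 0 → ∀ i, u i = 0 := by
    intro u hu h0 i
    rw [huniv, Finset.sum_insert hi0B, h0, zero_smul, zero_add] at hu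
    by_cases hi : i ∈ B
    · exact linearIndepOn_finset_iff.mp hB u hu i hi
    · have : i ∈ Finset.univ \ B := by simp [hi]
      rw [hi0] at this
      rw [Finset.mem_singleton.mp this, h0]
  let _ : NormalizedGCDMonoid 𝐒 := Nonempty.some inferInstance
  obtain ⟨v, hv, hgcd⟩ := Finset.extract_gcd w (s := Finset.univ) ⟨i0, Finset.mem_univ _⟩
  set g := Finset.univ.gcd w with hg
  have hwi0 : w i0 ≠ 0 := by simpa [w] using ha0
  have hg0 : g ≠ 0 := by
    intro h; apply hwi0; rw [hv i0 (Finset.mem_univ _), h, zero_mul]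
  have hvi0 : v i0 ≠ 0 := by
    intro h; apply hwi0; rw [hv i0 (Finset.mem_univ _), h, mul_zero]
  have hvs : ∑ i, v i • m i = 0 := by
    apply hsm g _ hg0
    rw [Finset.smul_sum, ← hw]
    refine Finset.sum_congr rfl fun i hi => ?_
    rw [hv i hi, mul_smul]
  refine ⟨v, ⟨i0, hvi0⟩, hvs, fun u hu => ?_⟩
  have hrel : ∀ j, v i0 * u j = u i0 * v j := by
    intro j
    have := hzero (fun j => v i0 * u j - u i0 * v j) (by
      simp only [sub_smul, mul_smul, Finset.sum_sub_distrib, ← Finset.smul_sum, hu, hvs]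
      simp) (by ring) j
    exact sub_eq_zero.mp this
  have hdvd : v i0 ∣ u i0 := by
    have h1 : v i0 ∣ Finset.univ.gcd (fun j => u i0 * v j) :=
      Finset.dvd_gcd fun j _ => ⟨u j, (hrel j).symm⟩
    have h2 := h1.trans (Finset.gcd_mul_left' Finset.univ v (u i0)).dvd
    rwa [hgcd, mul_one] at h2
  obtain ⟨d, hd⟩ := hdvd
  refine ⟨d, fun j => mul_left_cancel₀ hvi0 ?_⟩
  rw [hrel j, hd]; ring

/-- the linear forms vanishing at `p` -/
noncomputable def yy (p : Fin (n + 1) → k) (j : Fin n) : 𝐒 :=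
  X j.succ - C (p j.succ / p 0) * X 0

noncomputable def qq (p : Fin (n + 1) → k) (i : ℕ) : Ideal 𝐒 :=
  Ideal.span {y | ∃ j : Fin n, (j : ℕ) < i ∧ y = yy p j}

noncomputable def sub (p : Fin (n + 1) → k) (i : ℕ) : 𝐒 →ₐ[k] 𝐒 :=
  aeval (Fin.cons (X 0) (fun j : Fin n => if (j : ℕ) < i then C (p j.succ / p 0) * X 0
    else X j.succ))

lemma qq_ker (p : Fin (n + 1) → k) (i : ℕ) : qq p i = RingHom.ker (sub p i) := by
  apply le_antisymm
  · refine Ideal.span_le.mpr ?_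
    rintro _ ⟨j, hj, rfl⟩
    simp [RingHom.mem_ker, sub, yy, hj, MvPolynomial.algebraMap_eq]
  · intro f hf
    have hc : (Ideal.Quotient.mkₐ k (qq p i)).comp (sub p i) = Ideal.Quotient.mkₐ k (qq p i) := by
      refine MvPolynomial.algHom_ext fun l => ?_
      refine Fin.cases ?_ (fun j => ?_) l
      · simp [sub]
      · by_cases hj : (j : ℕ) < i
        · simp only [sub, AlgHom.comp_apply, aeval_X, Fin.cons_succ, hj, if_true]
          symm
          refine Ideal.Quotient.eq.mpr (Ideal.subset_span ⟨j, hj, rfl⟩)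
        · simp [sub, hj]
    have h1 := AlgHom.congr_fun hc f
    rw [AlgHom.comp_apply, (RingHom.mem_ker).mp hf, map_zero] at h1
    exact Ideal.Quotient.eq_zero_iff_mem.mp h1.symm

lemma qq_prime (p : Fin (n + 1) → k) (i : ℕ) : (qq p i).IsPrime := by
  rw [qq_ker]; exact RingHom.ker_isPrime _

lemma yy_notMem (p : Fin (n + 1) → k) (i : Fin n) : yy p i ∉ qq p i := by
  rw [qq_ker, RingHom.mem_ker]
  intro h
  have := congrArg (eval (Pi.single i.succ 1)) h
  simp [sub, yy, MvPolynomial.algebraMap_eq] at this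

lemma qq_eval (p : Fin (n + 1) → k) (hp : p 0 ≠ 0) (i : ℕ) (f : 𝐒) (hf : f ∈ qq p i) :
    eval p f = 0 := by
  have : qq p i ≤ RingHom.ker (eval p) := by
    refine Ideal.span_le.mpr ?_
    rintro _ ⟨j, hj, rfl⟩
    simp [RingHom.mem_ker, yy, hp]
  exact this hf

lemma qq_succ (p : Fin (n + 1) → k) (i : Fin n) : qq p (i + 1) = qq p i ⊔ Ideal.span {yy p i} := by
  rw [qq, qq, ← Ideal.span_union]
  congr 1
  ext y
  constructor
  · rintro ⟨j, hj, rfl⟩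
    rcases Nat.lt_succ_iff_lt_or_eq.mp hj with h | h
    · exact Or.inl ⟨j, h, rfl⟩
    · exact Or.inr (by rw [Fin.ext h]; rfl)
  · rintro (⟨j, hj, rfl⟩ | h)
    · exact ⟨j, by omega, rfl⟩
    · exact ⟨i, by omega, h⟩

lemma wreg [Infinite k]
    {ι : Type} [Fintype ι] (m : ι → R) (hspan : Submodule.span 𝐒 (Set.range m) = ⊤)
    (v : ι → 𝐒) (i1 : ι) (hv : v i1 ≠ 0) (hv0 : ∑ i, v i • m i = 0)
    (hker : ∀ u : ι → 𝐒, ∑ i, u i • m i = 0 → ∃ c : 𝐒, ∀ i, u i = c * v i) :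
    ∃ p : Fin (n + 1) → k, RingTheory.Sequence.IsWeaklyRegular R
      (List.ofFn fun j : Fin n => algebraMap 𝐒 R (yy p j)) := by
  obtain ⟨p, hp⟩ : ∃ p, eval p (v i1 * X 0) ≠ 0 := by
    by_contra! hc
    have : v i1 * X 0 = 0 := MvPolynomial.funext fun p => by rw [hc p, map_zero]
    exact (mul_ne_zero hv (X_ne_zero 0)) this
  rw [map_mul, eval_X, mul_ne_zero_iff] at hp
  obtain ⟨hp1, hp0⟩ := hp
  refine ⟨p, ⟨fun i hi => ?_⟩⟩
  have hi' : i < n := by simpa using hi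
  have hJ : (Ideal.ofList ((List.ofFn fun j : Fin n => algebraMap 𝐒 R (yy p j)).take i) • ⊤ :
      Submodule R R) = (qq p i).map (algebraMap 𝐒 R) := by
    rw [smul_eq_mul, Ideal.mul_top, qq, Ideal.map_span, Ideal.ofList]
    congr 1
    ext x
    simp only [Set.mem_ofPred_eq, List.mem_take_iff_getElem, Set.mem_image]
    constructor
    · rintro ⟨j, hj, rfl⟩
      simp only [List.length_ofFn, lt_min_iff] at hj
      exact ⟨_, ⟨⟨j, hj.2⟩, hj.1, rfl⟩, by simp⟩
    · rintro ⟨_, ⟨j, hj, rfl⟩, rfl⟩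
      exact ⟨j, by simp [hj], by simp⟩
  have hmem : ∀ x : R, x ∈ (qq p i).map (algebraMap 𝐒 R) ↔
      ∃ b : ι → 𝐒, (∀ l, b l ∈ qq p i) ∧ ∑ l, b l • m l = x := by
    intro x
    have h1 : x ∈ (qq p i).map (algebraMap 𝐒 R) ↔
      x ∈ (qq p i) • Submodule.span 𝐒 (Set.range m) := by
      rw [hspan, Ideal.smul_top_eq_map]; rfl
    rw [h1, Submodule.mem_ideal_smul_span_iff_exists_sum]
    constructor
    · rintro ⟨a, ha, rfl⟩
      exact ⟨a, ha, (Finsupp.sum_fintype a (fun i c => c • m i) (fun _ => zero_smul _ _)).symm⟩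
    · rintro ⟨b, hb, rfl⟩
      exact ⟨Finsupp.equivFunOnFinite.symm b, hb, Finsupp.sum_fintype _ _ (fun _ => zero_smul _ _)⟩
  rw [hJ, isSMulRegular_quotient_iff_mem_of_smul_mem]
  intro x hx
  simp only [List.getElem_ofFn, smul_eq_mul] at hx
  have hsx : x ∈ Submodule.span 𝐒 (Set.range m) := hspan ▸ Submodule.mem_top
  obtain ⟨a, rfl⟩ := (Submodule.mem_span_range_iff_exists_fun _).mp hsx
  obtain ⟨b, hb, hbx⟩ := (hmem _).mp hx
  set y := yy p ⟨i, hi'⟩ with hy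
  obtain ⟨c, hc⟩ := hker (fun l => y * a l - b l) (by
    simp only [sub_smul, mul_smul, Finset.sum_sub_distrib, ← Finset.smul_sum, hbx]
    rw [Algebra.smul_def, sub_self])
  have hprime := qq_prime p (i + 1)
  have hsucc : qq p (i + 1) = qq p i ⊔ Ideal.span {y} := qq_succ p ⟨i, hi'⟩
  have hc1 : c ∈ qq p (i + 1) := by
    have h2 : c * v i1 ∈ qq p (i + 1) := by
      rw [← hc i1, hsucc]
      refine sub_mem ?_ (Ideal.mem_sup_left (hb i1))
      exact Ideal.mem_sup_right (Ideal.mul_mem_right _ _ (Ideal.mem_span_singleton_self y))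
    exact (hprime.mem_or_mem h2).resolve_right fun h => hp1 (qq_eval p hp0 _ _ h)
  rw [hsucc] at hc1
  obtain ⟨c2, hc2, c3, hc3, hcc⟩ := Submodule.mem_sup.mp hc1
  obtain ⟨c1, rfl⟩ := Ideal.mem_span_singleton'.mp hc3
  refine (hmem _).mpr ⟨fun l => a l - c1 * v l, fun l => ?_, ?_⟩
  · have h3 : y * (a l - c1 * v l) ∈ qq p i := by
      have : y * (a l - c1 * v l) = b l + c2 * v l := by
        have := hc l
        rw [← hcc] at this
        linear_combination this
      rw [this]
      exact add_mem (hb l) (Ideal.mul_mem_right _ _ hc2)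
    exact ((qq_prime p i).mem_or_mem h3).resolve_left (yy_notMem p ⟨i, hi'⟩)
  · simp only [sub_smul, mul_smul, Finset.sum_sub_distrib, ← Finset.smul_sum, hv0]
    simp

lemma compl_fam {V : Type} [AddCommGroup V] [Module k V] [FiniteDimensional k V] (a e : ℕ)
    (hV : Module.finrank k V ≤ a + e) (l : Fin a → V) (hl : LinearIndependent k l) :
    ∃ t : Fin e → V, Submodule.span k (Set.range l) ⊔ Submodule.span k (Set.range t) = ⊤ := by
  obtain ⟨Q, hQ⟩ := Submodule.exists_isCompl (Submodule.span k (Set.range l))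
  have h1 := Submodule.finrank_add_eq_of_isCompl hQ
  rw [finrank_span_eq_card hl, Fintype.card_fin] at h1
  let b := Module.finBasis k Q
  refine ⟨fun i => if h : (i : ℕ) < Module.finrank k Q then (b ⟨i, h⟩ : V) else 0, ?_⟩
  rw [eq_top_iff, ← hQ.sup_eq_top]
  refine sup_le_sup_left ?_ _
  intro x hx
  have h2 : (⟨x, hx⟩ : Q) ∈ Submodule.span k (Set.range b) := b.span_eq ▸ Submodule.mem_top
  obtain ⟨c, hc⟩ := (Submodule.mem_span_range_iff_exists_fun _).mp h2
  have h3 : x = ∑ i, c i • (b i : V) := by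
    have := congrArg Subtype.val hc
    simpa using this.symm
  rw [h3]
  refine sum_mem fun i _ => Submodule.smul_mem _ _ (Submodule.subset_span ?_)
  exact ⟨⟨i, by have := i.2; omega⟩, by simp⟩

lemma multiset_mem (h : SGr k R A pr) {α : Type} (t : α → R) (w : α → ℕ)
    (ht : ∀ a, t a ∈ A (w a)) (s : Multiset α) : (s.map t).prod ∈ A ((s.map w).sum) := by
  induction s using Multiset.induction with
  | empty => simpa using h.one
  | cons a s ih => simpa using h.mul _ _ _ _ (ht a) ih

lemma main_alg [Infinite k] [IsDomain R] (h : SGr k R A pr)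
    (hl : ∀ i, algebraMap 𝐒 R (X i) ∈ A 1) (e r : ℕ) (hn : 0 < n)
    (hdim : ringKrullDim R = n + 1) (hfd : ∀ d, FiniteDimensional k (A d))
    (hA1 : Module.finrank k (A 1) ≤ n + 1 + e)
    (hr : ∀ x ∈ A (r + 1), x ∈ Ideal.span (Set.range fun i => algebraMap 𝐒 R (X i)))
    (P : Polynomial ℚ) (hP : P.natDegree = n)
    (hH : ∀ᶠ d : ℕ in Filter.atTop,
      (Module.finrank k (A d) : ℚ) = Polynomial.eval (d : ℚ) P)
    (hD : (((e + r).choose r - 1 : ℕ) : ℚ) = P.leadingCoeff * n.factorial) :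
    ∃ rs : List R, rs.length = n ∧ (∀ x ∈ rs, x ∈ A 1) ∧
      RingTheory.Sequence.IsWeaklyRegular R rs := by
  have hfin : Module.Finite 𝐒 R := h.fin hl r hr (Module.Finite.iff_fg.mp (hfd 1))
  have hinj : Function.Injective (algebraMap 𝐒 R) := inj (k := k) hdim
  have hfd1 := hfd 1
  have hli0 : LinearIndependent k (fun i => algebraMap 𝐒 R (X i)) :=
    (linearIndependent_X (Fin (n + 1)) k).map' (IsScalarTower.toAlgHom k 𝐒 R).toLinearMap
      (LinearMap.ker_eq_bot.mpr hinj)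
  let l : Fin (n + 1) → A 1 := fun i => ⟨algebraMap 𝐒 R (X i), hl i⟩
  have hli : LinearIndependent k l := LinearIndependent.of_comp (A 1).subtype hli0
  obtain ⟨t, ht⟩ := compl_fam (n + 1) e hA1 l hli
  let t' : Fin (e + 1) → R := Fin.cons 1 (fun j => (t j : R))
  let w : Fin (e + 1) → ℕ := Fin.cons 0 (fun _ => 1)
  have htw : ∀ a, t' a ∈ A (w a) := by
    intro a
    refine Fin.cases ?_ (fun j => ?_) a
    · simpa [t', w] using h.one
    · simp [t', w]
  let W : Submodule 𝐒 R := Submodule.span 𝐒 (Set.range t')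
  have h1W : (1 : R) ∈ W := Submodule.subset_span ⟨0, rfl⟩
  have hAW : ∀ x ∈ A 1, x ∈ W := by
    intro x hx
    have hle : Submodule.span k (Set.range l) ⊔ Submodule.span k (Set.range t) ≤
        (W.restrictScalars k).comap (A 1).subtype := by
      refine sup_le (Submodule.span_le.mpr ?_) (Submodule.span_le.mpr ?_)
      · rintro _ ⟨i, rfl⟩
        change algebraMap 𝐒 R (X i) ∈ W
        rw [← mul_one (algebraMap 𝐒 R (X i)), ← Algebra.smul_def]
        exact W.smul_mem _ h1W
      · rintro _ ⟨i, rfl⟩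
        exact Submodule.subset_span (s := Set.range t') ⟨i.succ, rfl⟩
    rw [ht] at hle
    exact hle (Submodule.mem_top (x := ⟨x, hx⟩))
  have hWr : W ^ r = ⊤ := h.pow_eq_top hl r hr W h1W hAW
  let m : Sym (Fin (e + 1)) r → R := fun s => ((s : Multiset (Fin (e + 1))).map t').prod
  let dg : Sym (Fin (e + 1)) r → ℕ := fun s => ((s : Multiset (Fin (e + 1))).map w).sum
  have hm : ∀ s, m s ∈ A (dg s) := fun s => h.multiset_mem t' w htw _
  have hdg : ∀ s, dg s ≤ r := by
    intro s
    have := Multiset.sum_le_card_nsmul ((s : Multiset (Fin (e + 1))).map w) 1 (by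
      intro x hx
      obtain ⟨a, _, rfl⟩ := Multiset.mem_map.mp hx
      refine Fin.cases ?_ (fun j => ?_) a <;> simp [w])
    simpa [dg] using this
  have hspan : Submodule.span 𝐒 (Set.range m) = ⊤ := by
    rw [eq_top_iff, ← hWr, Submodule.span_pow]
    refine Submodule.span_mono ?_
    intro x hx
    obtain ⟨f, rfl⟩ := Set.mem_pow.mp hx
    choose g hg using fun i => (f i).2
    refine ⟨⟨Multiset.ofList (List.ofFn g), by simp⟩, ?_⟩
    simp only [m, Sym.coe_mk, Multiset.map_coe, Multiset.prod_coe, List.map_ofFn]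
    congr 2
    funext i
    exact hg i
  obtain ⟨B, hB, hmax, hBc⟩ := rank_main hinj hn h hl m dg hm r hdg hfd hspan P hP hH
  have hBc' : B.card = (e + r).choose r - 1 := by
    rw [← hD] at hBc
    exact_mod_cast hBc
  obtain ⟨v, ⟨i1, hi1⟩, hv0, hker⟩ := ker_cyclic hinj m B hB hmax (by
    rw [hBc', Sym.card_sym_eq_choose, Fintype.card_fin, show e + 1 + r - 1 = e + r by omega]
    have := Nat.choose_pos (Nat.le_add_left r e)
    omega)
  obtain ⟨p, hp⟩ := wreg m hspan v i1 hi1 hv0 hker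
  refine ⟨_, by simp, ?_, hp⟩
  intro x hx
  obtain ⟨j, rfl⟩ := List.mem_ofFn.mp hx
  refine h.map_mem hl 1 _ ?_
  refine (isHomogeneous_X k _).sub ?_
  simpa using (isHomogeneous_C (Fin (n + 1)) (p j.succ / p 0)).mul (isHomogeneous_X k 0)

end poly

theorem main [Infinite k] [IsDomain R] (h : SGr k R A pr) (ℓ : Fin (n + 1) → R)
    (hl : ∀ i, ℓ i ∈ A 1) (e r : ℕ) (hn : 0 < n)
    (hdim : ringKrullDim R = n + 1) (hfd : ∀ d, FiniteDimensional k (A d))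
    (hA1 : Module.finrank k (A 1) ≤ n + 1 + e)
    (hr : ∀ x ∈ A (r + 1), x ∈ Ideal.span (Set.range ℓ))
    (P : Polynomial ℚ) (hP : P.natDegree = n)
    (hH : ∀ᶠ d : ℕ in Filter.atTop,
      (Module.finrank k (A d) : ℚ) = Polynomial.eval (d : ℚ) P)
    (hD : (((e + r).choose r - 1 : ℕ) : ℚ) = P.leadingCoeff * n.factorial) :
    ∃ rs : List R, rs.length = n ∧ (∀ x ∈ rs, x ∈ A 1) ∧
      RingTheory.Sequence.IsWeaklyRegular R rs := by
  let _ : Algebra (MvPolynomial (Fin (n + 1)) k) R := (aeval ℓ).toAlgebra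
  have : IsScalarTower k (MvPolynomial (Fin (n + 1)) k) R :=
    IsScalarTower.of_algebraMap_eq fun c => ((aeval ℓ).commutes c).symm
  have e1 : ∀ i, algebraMap (MvPolynomial (Fin (n + 1)) k) R (X i) = ℓ i := fun i => by
    change aeval ℓ (X i) = ℓ i
    simp
  refine main_alg h (fun i => by rw [e1]; exact hl i) e r hn hdim hfd hA1 ?_ P hP hH hD
  simp only [e1]
  exact hr

end SGr

end helpers

section concrete
open MvPolynomial
variable {k : Type} [Field k] {N : ℕ}

noncomputable def prI (I : Ideal (MvPolynomial (Fin N) k)) (hI : Paper.IdealHomog k I) (d : ℕ) :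
    (MvPolynomial (Fin N) k ⧸ I) →ₗ[k] (MvPolynomial (Fin N) k ⧸ I) :=
  Submodule.liftQ (I.restrictScalars k)
    ((Ideal.Quotient.mkₐ k I).toLinearMap ∘ₗ homogeneousComponent d) (by
      intro f hf
      exact Ideal.Quotient.eq_zero_iff_mem.mpr (hI f hf d))

lemma prI_mk (I : Ideal (MvPolynomial (Fin N) k)) (hI : Paper.IdealHomog k I) (d : ℕ)
    (f : MvPolynomial (Fin N) k) :
    prI I hI d (Ideal.Quotient.mk I f) = Ideal.Quotient.mk I (homogeneousComponent d f) := rfl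

lemma mem_comp (I : Ideal (MvPolynomial (Fin N) k)) (d : ℕ) (x : MvPolynomial (Fin N) k ⧸ I) :
    x ∈ Paper.quotComponent k I d ↔ ∃ f : MvPolynomial (Fin N) k, f.IsHomogeneous d ∧
      Ideal.Quotient.mk I f = x := by
  rfl

lemma sgr (I : Ideal (MvPolynomial (Fin N) k)) (hI : Paper.IdealHomog k I) :
    SGr k (MvPolynomial (Fin N) k ⧸ I) (Paper.quotComponent k I) (prI I hI) where
  same d z hz := by
    obtain ⟨f, hf, rfl⟩ := (mem_comp I d z).mp hz
    rw [prI_mk, homogeneousComponent_of_mem hf, if_pos rfl]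
  ne d d' z hz hd := by
    obtain ⟨f, hf, rfl⟩ := (mem_comp I d z).mp hz
    rw [prI_mk, homogeneousComponent_of_mem hf, if_neg (by omega), map_zero]
  mul i j x y hx hy := by
    obtain ⟨f, hf, rfl⟩ := (mem_comp I i x).mp hx
    obtain ⟨g, hg, rfl⟩ := (mem_comp I j y).mp hy
    exact (mem_comp I _ _).mpr ⟨f * g, hf.mul hg, map_mul _ _ _⟩
  one := (mem_comp I _ _).mpr ⟨1, isHomogeneous_one _ _, map_one _⟩
  zero_le := by
    intro x hx
    obtain ⟨f, hf, rfl⟩ := (mem_comp I 0 x).mp hx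
    have h0 := homogeneousComponent_of_mem (m := 0) hf
    rw [if_pos rfl, homogeneousComponent_zero] at h0
    rw [← h0, Submodule.mem_span_singleton]
    refine ⟨coeff 0 f, ?_⟩
    rw [Algebra.smul_def, mul_one]
    rfl
  top := by
    rw [eq_top_iff]
    intro x _
    obtain ⟨f, rfl⟩ := Ideal.Quotient.mk_surjective x
    rw [← sum_homogeneousComponent f, map_sum]
    refine sum_mem fun i _ => ?_
    exact Submodule.mem_iSup_of_mem i ((mem_comp I _ _).mpr
      ⟨_, homogeneousComponent_isHomogeneous i f, rfl⟩)
  succ d := by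
    intro x hx
    obtain ⟨f, hf, rfl⟩ := (mem_comp I _ x).mp hx
    rw [f.as_sum, map_sum]
    refine sum_mem fun s hs => ?_
    have hdeg : s.degree = d + 1 := by
      have := hf (mem_support_iff.mp hs)
      rw [Finsupp.degree_eq_weight_one]
      exact this
    have hs0 : s ≠ 0 := by
      rintro rfl
      simp at hdeg
    obtain ⟨i, hi⟩ := Finsupp.ne_iff.mp hs0
    have hs1 : Finsupp.single i 1 + (s - Finsupp.single i 1) = s := by
      apply add_tsub_cancel_of_le
      rw [Finsupp.single_le_iff]
      exact Nat.one_le_iff_ne_zero.mpr hi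
    have hd2 : (s - Finsupp.single i 1).degree = d := by
      have := congrArg Finsupp.degree hs1
      rw [map_add, Finsupp.degree_single, hdeg] at this
      omega
    have : monomial s (coeff s f) = X i * monomial (s - Finsupp.single i 1) (coeff s f) := by
      rw [X, monomial_mul, hs1, one_mul]
    rw [this, map_mul]
    exact Submodule.mul_mem_mul ((mem_comp I _ _).mpr ⟨_, isHomogeneous_X k i, rfl⟩)
      ((mem_comp I _ _).mpr ⟨_, isHomogeneous_monomial _ hd2, rfl⟩)

lemma comp_one (I : Ideal (MvPolynomial (Fin N) k)) :
    Paper.quotComponent k I 1 = Submodule.span k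
      (Set.range fun i : Fin N => Ideal.Quotient.mk I (X i)) := by
  rw [Paper.quotComponent, homogeneousSubmodule_one_eq_span_X, Submodule.map_span, ← Set.range_comp]
  rfl

lemma comp_fd (I : Ideal (MvPolynomial (Fin N) k)) (hI : Paper.IdealHomog k I) (d : ℕ) :
    FiniteDimensional k (Paper.quotComponent k I d) := by
  induction d with
  | zero =>
    exact Submodule.finiteDimensional_of_le ((sgr I hI).zero_le)
  | succ d ih =>
    have h1 : (Paper.quotComponent k I 1).FG := by
      rw [comp_one]; exact Submodule.fg_span (Set.finite_range _)
    have h2 := h1.mul (Module.Finite.iff_fg.mp ih)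
    have := Module.Finite.iff_fg.mpr h2
    exact Submodule.finiteDimensional_of_le ((sgr I hI).succ d)

lemma irr_ne_top (I : Ideal (MvPolynomial (Fin N) k)) (hI : Paper.IdealHomog k I) (h : I ≠ ⊤) :
    Paper.irrelevantIdeal k I ≠ ⊤ := by
  have hc : ∀ f ∈ I, constantCoeff f = 0 := by
    intro f hf
    by_contra h0
    have h1 := hI f hf 0
    rw [homogeneousComponent_zero] at h1
    exact h (Ideal.eq_top_of_isUnit_mem _ h1 ((isUnit_iff_ne_zero.mpr h0).map C))
  let φ := Ideal.Quotient.lift I (constantCoeff (σ := Fin N) (R := k)) hc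
  have hle : Paper.irrelevantIdeal k I ≤ RingHom.ker φ := by
    refine Ideal.span_le.mpr ?_
    rintro _ ⟨i, rfl⟩
    simp [RingHom.mem_ker, φ]
  intro ht
  rw [ht] at hle
  exact RingHom.ker_ne_top φ (top_le_iff.mp hle)

end concrete

/-- Theorem 5.1: a non-degenerate projective variety (reduced and irreducible, i.e. `I_X`
prime) of dimension `n`, codimension `e` and reduction number `r` with
`deg(X) = C(e+r, r) - 1` has `depth(R) ≥ n`: there is a regular sequence of length `n`
in the irrelevant maximal ideal of `R`. -/
theorem stmt19 (k : Type) [Field k] [IsAlgClosed k] (n e : ℕ) (he : 0 < e)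
    (I : Ideal (MvPolynomial (Fin (n + e + 1)) k)) (hprime : I.IsPrime)
    (hIhom : Paper.IdealHomog k I) (hnd : Paper.Nondegenerate k I)
    (hdim : ringKrullDim (MvPolynomial (Fin (n + e + 1)) k ⧸ I) = n + 1)
    (hD : Paper.HasDeg k I n
      ((e + Paper.redNumAll k I (n + 1)).choose (Paper.redNumAll k I (n + 1)) - 1)) :
    ∃ rs : List (MvPolynomial (Fin (n + e + 1)) k ⧸ I), rs.length = n ∧
      (∀ x ∈ rs, x ∈ Paper.irrelevantIdeal k I) ∧
      RingTheory.Sequence.IsRegular (MvPolynomial (Fin (n + e + 1)) k ⧸ I) rs := by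
  obtain ⟨P, hP, hPD, hH⟩ := hD
  have hdom : IsDomain (MvPolynomial (Fin (n + e + 1)) k ⧸ I) := Ideal.Quotient.isDomain I
  have hirr := irr_ne_top I hIhom hprime.ne_top
  suffices hw : ∃ rs : List (MvPolynomial (Fin (n + e + 1)) k ⧸ I), rs.length = n ∧
      (∀ x ∈ rs, x ∈ Paper.quotComponent k I 1) ∧
      RingTheory.Sequence.IsWeaklyRegular (MvPolynomial (Fin (n + e + 1)) k ⧸ I) rs by
    obtain ⟨rs, h1, h2, h3⟩ := hw
    have h4 : ∀ x ∈ rs, x ∈ Paper.irrelevantIdeal k I := by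
      intro x hx
      have h5 := h2 x hx
      rw [comp_one] at h5
      have hle : Submodule.span k (Set.range fun i : Fin (n + e + 1) =>
          Ideal.Quotient.mk I (MvPolynomial.X i)) ≤
          (Paper.irrelevantIdeal k I).restrictScalars k :=
        Submodule.span_le.mpr fun y hy => Ideal.subset_span hy
      exact hle h5
    refine ⟨rs, h1, h4, h3, fun htop => hirr ?_⟩
    rw [smul_eq_mul, Ideal.mul_top] at htop
    rw [eq_top_iff, htop]
    exact Ideal.span_le.mpr h4
  rcases Nat.eq_zero_or_pos n with hn | hn
  · exact ⟨[], hn.symm, by simp, RingTheory.Sequence.IsWeaklyRegular.nil _ _⟩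
  have hne : {t | 0 < t ∧ ∃ L : Finset (MvPolynomial (Fin (n + e + 1)) k ⧸ I),
      (L : Set (MvPolynomial (Fin (n + e + 1)) k ⧸ I)) ⊆ Paper.quotComponent k I 1 ∧
      L.card = n + 1 ∧ Paper.quotComponent k I (t + 1) ≤
      (Ideal.span (L : Set (MvPolynomial (Fin (n + e + 1)) k ⧸ I))).restrictScalars k}.Nonempty := by
    by_contra hemp
    have hr0 : Paper.redNumAll k I (n + 1) = 0 := by
      rw [Paper.redNumAll, Set.not_nonempty_iff_eq_empty.mp hemp, Nat.sInf_empty]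
    rw [hr0] at hPD
    have : P.leadingCoeff = 0 := by
      have hf : (n.factorial : ℚ) ≠ 0 := by exact_mod_cast n.factorial_ne_zero
      simpa [hf] using hPD
    rw [Polynomial.leadingCoeff_eq_zero] at this
    rw [this, Polynomial.natDegree_zero] at hP
    omega
  obtain ⟨-, L, hL1, hLc, hL⟩ := Nat.sInf_mem hne
  let q := L.equivFinOfCardEq hLc
  have hrange : Set.range (fun i => ((q.symm i : L) : MvPolynomial (Fin (n + e + 1)) k ⧸ I)) =
      (L : Set (MvPolynomial (Fin (n + e + 1)) k ⧸ I)) := by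
    ext x
    constructor
    · rintro ⟨i, rfl⟩
      exact (q.symm i).2
    · intro hx
      exact ⟨q ⟨x, hx⟩, by simp⟩
  have hinf : Infinite k := inferInstance
  refine SGr.main (sgr I hIhom) (fun i => ((q.symm i : L) : MvPolynomial (Fin (n + e + 1)) k ⧸ I))
    (fun i => hL1 (q.symm i).2) e (Paper.redNumAll k I (n + 1)) hn hdim (comp_fd I hIhom) ?_ ?_
    P hP hH hPD
  · rw [comp_one]
    refine (finrank_range_le_card _).trans ?_
    rw [Fintype.card_fin]
    omega
  · rw [hrange]
    exact fun x hx => hL hx
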